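/- arXiv:1211.3056 — 2 statements merged into one kernel-verified Lean document; each statement's English description precedes it below -/
import Mathlib

section
/- Directed reduction (Property 2): for every i ≥ 0 and every t with 0 ≤ t < k_{i+1}, set n = q_i + q_{i−1,t}. The q_i new points added when passing from the configuration of n points to the configuration of n + q_i points, namely the points {a·x} for n ≤ x < n + q_i, are exactly the points s + θ_i for s ranging over the left endpoints of the q_i gaps of length θ_{i−1,t} if i is even, and exactly the points s + θ_{i−1,t} − θ_i for s ranging over those same left endpoints if i is odd; no new point falls in any gap of length θ_i. -/
/-- The configuration of `n` points `{a·x mod 1 : 0 ≤ x < n}` on the unit segment. -/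
noncomputable def pts (a : ℝ) (n : ℕ) : Finset ℝ :=
  (Finset.range n).image fun x : ℕ => Int.fract (a * x)

/-- The length of the gap of the configuration of `n` points whose left endpoint is `s`. -/
noncomputable def gapAt (a : ℝ) (n : ℕ) (s : ℝ) : ℝ :=
  sInf {d : ℝ | 0 < d ∧ (s + d = 1 ∨ s + d ∈ pts a n)}

/-!
Write `B = θ_i` and `A = θ_{i-1,t}`. Modulo `1`, one of the steps `x ↦ x + q_i` and `x ↦ x +
q_{i-1,t}` moves `{a·x}` up and the other moves it down (which one depends on the parity of `i`), by
the amounts `B` and `A` respectively. Since `q_i·A + q_{i-1,t}·B = 1`, these two steps form a basis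
of the lattice of all `(m, a·m - j)`. A positive displacement between two indices below `n = q_i +
q_{i-1,t}` therefore has nonnegative coordinates, as coordinates of opposite signs force an index
shift of size at least `n`. So the successor of `{a·x}` is reached by a single basis step, and the
index `x` alone decides which one: the two gap lengths sort the indices into an initial and a final
block, and translating the block of the long gaps gives the new points.
-/

lemma mem_pts {a : ℝ} {n : ℕ} {s : ℝ} : s ∈ pts a n ↔ ∃ x < n, Int.fract (a * x) = s := by
  simp [pts]

lemma fract_eq_fract_add {y z c : ℝ} (j : ℤ) (hyz : z = y + j + c) (hc : 0 ≤ c)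
    (hlt : Int.fract y + c < 1) : Int.fract z = Int.fract y + c := by
  refine Int.fract_eq_iff.2 ⟨add_nonneg (Int.fract_nonneg y) hc, hlt, ⌊y⌋ + j, ?_⟩
  push_cast
  linear_combination hyz + Int.self_sub_floor y

section Gaps

variable {a : ℝ} {n : ℕ}

lemma gapAt_le {s d : ℝ} (hd : 0 < d) (h : s + d = 1 ∨ s + d ∈ pts a n) : gapAt a n s ≤ d :=
  csInf_le ⟨0, fun _ he => he.1.le⟩ ⟨hd, h⟩

lemma gapAt_le_sub {s s' : ℝ} (hs' : s' ∈ pts a n) (h : s < s') : gapAt a n s ≤ s' - s :=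
  gapAt_le (sub_pos.2 h) (Or.inr (by rwa [add_sub_cancel]))

lemma gapAt_fract_le (x : ℝ) : gapAt a n (Int.fract x) ≤ 1 - Int.fract x :=
  gapAt_le (sub_pos.2 (Int.fract_lt_one x)) (Or.inl (add_sub_cancel _ _))

lemma eq_of_mem_gaps {s s' z : ℝ} (hs : s ∈ pts a n) (hs' : s' ∈ pts a n)
    (hz : z ∈ Set.Ioo s (s + gapAt a n s)) (hz' : z ∈ Set.Ioo s' (s' + gapAt a n s')) :
    s = s' := by
  rcases lt_trichotomy s s' with h | h | h
  · linarith [gapAt_le_sub hs' h, hz.2, hz'.1]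
  · exact h
  · linarith [gapAt_le_sub hs h, hz.1, hz'.2]

lemma notMem_gap_of_mem_image_add {A B c : ℝ} (hc : 0 < c) (hcA : c < A) (hBA : B ≠ A) {z : ℝ}
    (hz : z ∈ ((pts a n).filter (fun s => gapAt a n s = A)).image (fun s => s + c))
    {s : ℝ} (hs : s ∈ pts a n) (hsB : gapAt a n s = B) : ¬(s < z ∧ z < s + B) := by
  rintro ⟨hsz, hzs⟩
  obtain ⟨s', hs', rfl⟩ := Finset.mem_image.1 hz
  obtain ⟨hs', hsA⟩ := Finset.mem_filter.1 hs'
  have hss' : s = s' := eq_of_mem_gaps hs hs' ⟨hsz, by rwa [hsB]⟩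
    ⟨lt_add_of_pos_right s' hc, by rw [hsA]; exact add_lt_add_right hcA s'⟩
  exact hBA (by rw [← hsB, hss', hsA])

lemma exists_index_of_add_mem {x : ℕ} {d : ℝ} (hn : 0 < n)
    (h : Int.fract (a * x) + d = 1 ∨ Int.fract (a * x) + d ∈ pts a n) :
    ∃ y < n, ∃ j : ℤ, d = a * ((y : ℝ) - x) - j := by
  have hx := Int.self_sub_floor (a * x)
  rcases h with h | h
  · refine ⟨0, hn, -1 - ⌊a * x⌋, ?_⟩
    push_cast
    linear_combination h + hx
  · obtain ⟨y, hy, hys⟩ := mem_pts.1 h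
    refine ⟨y, hy, ⌊a * y⌋ - ⌊a * x⌋, ?_⟩
    push_cast
    linear_combination hx - Int.self_sub_floor (a * y) - hys

lemma gapAt_fract_eq {x y : ℕ} {c : ℝ} (hy : y < n) (hc : 0 < c) (j : ℤ)
    (hj : a * y = a * x + j + c)
    (hmin : ∀ z < n, ∀ l : ℤ, 0 < a * ((z : ℝ) - x) - l → c ≤ a * ((z : ℝ) - x) - l) :
    gapAt a n (Int.fract (a * x)) = c := by
  have lower : ∀ d, 0 < d → (Int.fract (a * x) + d = 1 ∨ Int.fract (a * x) + d ∈ pts a n) →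
      c ≤ d := by
    intro d hd h
    obtain ⟨z, hz, l, rfl⟩ := exists_index_of_add_mem (Nat.zero_lt_of_lt hy) h
    exact hmin z hz l hd
  have hle : c ≤ 1 - Int.fract (a * x) :=
    lower _ (sub_pos.2 (Int.fract_lt_one _)) (Or.inl (add_sub_cancel _ _))
  refine IsLeast.csInf_eq ⟨⟨hc, ?_⟩, fun d hd => lower d hd.1 hd.2⟩
  rcases (le_sub_iff_add_le'.1 hle).eq_or_lt with h | h
  · exact Or.inl h
  · exact Or.inr (mem_pts.2 ⟨y, hy, fract_eq_fract_add j hj hc.le h⟩)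

end Gaps

lemma nonneg_of_abs_sub_lt {u v : ℕ} {α β : ℝ} (hα : 0 ≤ α) (hβ : 0 ≤ β) {U V : ℤ}
    (hm : |U * u - V * v| < (u + v : ℤ)) (hd : 0 < U * α + V * β) : 0 ≤ U ∧ 0 ≤ V := by
  obtain ⟨hlow, hupp⟩ := abs_lt.1 hm
  have not_both_nonpos : ¬(U ≤ 0 ∧ V ≤ 0) := by
    rintro ⟨hU, hV⟩
    have hU' : (U : ℝ) ≤ 0 := by exact_mod_cast hU
    have hV' : (V : ℝ) ≤ 0 := by exact_mod_cast hV
    linarith [mul_nonpos_of_nonpos_of_nonneg hU' hα, mul_nonpos_of_nonpos_of_nonneg hV' hβ]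
  constructor
  · by_contra! hU
    have hV : 0 < V := by
      by_contra! hV
      exact not_both_nonpos ⟨hU.le, hV⟩
    nlinarith [Int.natCast_nonneg u, Int.natCast_nonneg v]
  · by_contra! hV
    have hU : 0 < U := by
      by_contra! hU
      exact not_both_nonpos ⟨hU, hV.le⟩
    nlinarith [Int.natCast_nonneg u, Int.natCast_nonneg v]

/-- Modulo `1`, `u` steps of the rotation by `a` move up by `α` and `v` steps move down by `β`, and
the vectors `(u, α)` and `(-v, β)` form a basis of the lattice of all `(m, a * m - j)`; the last
condition is that their determinant is `1`. The configuration of `u + v` points then has only the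
gap lengths `α` and `β`. -/
structure GapBasis (a : ℝ) (u v : ℕ) (α β : ℝ) : Prop where
  up_pos : 0 < α
  down_pos : 0 < β
  up : ∃ p : ℤ, a * u = p + α
  down : ∃ p : ℤ, a * v = p - β
  det : u * β + v * α = 1

namespace GapBasis

variable {a α β : ℝ} {u v : ℕ}

lemma exists_coords (h : GapBasis a u v α β) (m j : ℤ) :
    ∃ U V : ℤ, m = U * u - V * v ∧ a * m - j = U * α + V * β := by
  obtain ⟨p, hp⟩ := h.up
  obtain ⟨p', hp'⟩ := h.down
  have det_int : (u : ℤ) * p' - v * p = 1 := by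
    have : (u : ℝ) * p' - v * p = 1 := by linear_combination h.det + v * hp - u * hp'
    exact_mod_cast this
  refine ⟨m * p' - j * v, m * p - j * u, by linear_combination -m * det_int, ?_⟩
  push_cast
  linear_combination (j - a * m) * h.det + (m * β) * hp + (m * α) * hp'

lemma exists_nat_coords (h : GapBasis a u v α β) {x y : ℕ} (hx : x < u + v) (hy : y < u + v)
    {j : ℤ} (hd : 0 < a * ((y : ℝ) - x) - j) :
    ∃ U V : ℕ, y + V * v = x + U * u ∧ a * ((y : ℝ) - x) - j = U * α + V * β := by
  obtain ⟨U, V, hm, hd'⟩ := h.exists_coords (y - x) j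
  push_cast at hd'
  have hUV : 0 ≤ U ∧ 0 ≤ V := by
    refine nonneg_of_abs_sub_lt (u := u) (v := v) h.up_pos.le h.down_pos.le ?_ (hd' ▸ hd)
    rw [← hm, abs_lt]
    omega
  lift U to ℕ using hUV.1
  lift V to ℕ using hUV.2
  refine ⟨U, V, ?_, by exact_mod_cast hd'⟩
  zify
  linear_combination hm

lemma up_le (h : GapBasis a u v α β) {x y : ℕ} (hx : x < v) (hy : y < u + v) {j : ℤ}
    (hd : 0 < a * ((y : ℝ) - x) - j) : α ≤ a * ((y : ℝ) - x) - j := by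
  obtain ⟨U, V, hyx, hUV⟩ := h.exists_nat_coords (by omega) hy hd
  rw [hUV] at hd ⊢
  have hU : U ≠ 0 := by
    rintro rfl
    have hV : V = 0 := by nlinarith
    simp [hV] at hd
  have hU' : (1 : ℝ) ≤ U := by exact_mod_cast Nat.one_le_iff_ne_zero.2 hU
  nlinarith [h.up_pos, mul_nonneg (Nat.cast_nonneg (α := ℝ) V) h.down_pos.le]

lemma down_le (h : GapBasis a u v α β) {x y : ℕ} (hvx : v ≤ x) (hx : x < u + v) (hy : y < u + v)
    {j : ℤ} (hd : 0 < a * ((y : ℝ) - x) - j) : β ≤ a * ((y : ℝ) - x) - j := by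
  obtain ⟨U, V, hyx, hUV⟩ := h.exists_nat_coords hx hy hd
  rw [hUV] at hd ⊢
  have hV : V ≠ 0 := by
    rintro rfl
    have hU : U = 0 := by nlinarith
    simp [hU] at hd
  have hV' : (1 : ℝ) ≤ V := by exact_mod_cast Nat.one_le_iff_ne_zero.2 hV
  nlinarith [h.down_pos, mul_nonneg (Nat.cast_nonneg (α := ℝ) U) h.up_pos.le]

lemma gapAt_of_lt (h : GapBasis a u v α β) {x : ℕ} (hx : x < v) :
    gapAt a (u + v) (Int.fract (a * x)) = α := by
  obtain ⟨p, hp⟩ := h.up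
  refine gapAt_fract_eq (y := x + u) (by omega) h.up_pos p ?_ fun _ hz _ => h.up_le hx hz
  push_cast
  linear_combination hp

lemma gapAt_of_ge (h : GapBasis a u v α β) {x : ℕ} (hvx : v ≤ x) (hx : x < u + v) :
    gapAt a (u + v) (Int.fract (a * x)) = β := by
  obtain ⟨p, hp⟩ := h.down
  refine gapAt_fract_eq (y := x - v) (by omega) h.down_pos (-p) ?_ fun _ hz _ =>
    h.down_le hvx hx hz
  push_cast [Nat.cast_sub hvx]
  linear_combination -hp

lemma filter_gapAt_eq_up (h : GapBasis a u v α β) (hne : α ≠ β) :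
    (pts a (u + v)).filter (fun s => gapAt a (u + v) s = α) =
      (Finset.range v).image fun x : ℕ => Int.fract (a * x) := by
  rw [pts, Finset.filter_image]
  congr 1
  ext x
  simp only [Finset.mem_filter, Finset.mem_range]
  refine ⟨fun ⟨hx, hgap⟩ => ?_, fun hx => ⟨by omega, h.gapAt_of_lt hx⟩⟩
  by_contra! hvx
  exact hne (hgap.symm.trans (h.gapAt_of_ge hvx hx))

lemma filter_gapAt_eq_down (h : GapBasis a u v α β) (hne : α ≠ β) :
    (pts a (u + v)).filter (fun s => gapAt a (u + v) s = β) =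
      (Finset.Ico v (u + v)).image fun x : ℕ => Int.fract (a * x) := by
  rw [pts, Finset.filter_image]
  congr 1
  ext x
  simp only [Finset.mem_filter, Finset.mem_range, Finset.mem_Ico]
  refine ⟨fun ⟨hx, hgap⟩ => ⟨?_, hx⟩, fun hx => ⟨hx.2, h.gapAt_of_ge hx.1 hx.2⟩⟩
  by_contra! hxv
  exact hne ((h.gapAt_of_lt hxv).symm.trans hgap)

lemma fract_mul_add_of_ge (h : GapBasis a u v α β) (hlt : α < β) {x : ℕ} (hvx : v ≤ x)
    (hx : x < u + v) : Int.fract (a * (x + u : ℕ)) = Int.fract (a * x) + α := by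
  obtain ⟨p, hp⟩ := h.up
  have hgap := gapAt_fract_le (a := a) (n := u + v) (a * x)
  rw [h.gapAt_of_ge hvx hx] at hgap
  refine fract_eq_fract_add p ?_ h.up_pos.le (by linarith)
  push_cast
  linear_combination hp

lemma fract_mul_add_of_lt (h : GapBasis a u v α β) (hlt : β < α) {x : ℕ} (hx : x < v) :
    Int.fract (a * (x + (u + v) : ℕ)) = Int.fract (a * x) + (α - β) := by
  obtain ⟨p, hp⟩ := h.up
  obtain ⟨p', hp'⟩ := h.down
  have hgap := gapAt_fract_le (a := a) (n := u + v) (a * x)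
  rw [h.gapAt_of_lt hx] at hgap
  refine fract_eq_fract_add (p + p') ?_ (sub_nonneg.2 hlt.le) (by linarith [h.down_pos])
  push_cast
  linear_combination hp + hp'

lemma image_Ico_of_up_lt_down (h : GapBasis a u v α β) (hlt : α < β) :
    (Finset.Ico (u + v) (u + v + u)).image (fun x : ℕ => Int.fract (a * x)) =
      ((pts a (u + v)).filter (fun s => gapAt a (u + v) s = β)).image (fun s => s + α) := by
  rw [h.filter_gapAt_eq_down hlt.ne, Finset.image_image, Nat.add_comm u v,
    ← Finset.image_add_right_Ico, Finset.image_image]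
  refine Finset.image_congr fun x hx => ?_
  obtain ⟨hvx, hx⟩ := Finset.mem_Ico.1 hx
  exact h.fract_mul_add_of_ge hlt hvx (by omega)

lemma image_Ico_of_down_lt_up (h : GapBasis a u v α β) (hlt : β < α) :
    (Finset.Ico (u + v) (u + v + v)).image (fun x : ℕ => Int.fract (a * x)) =
      ((pts a (u + v)).filter (fun s => gapAt a (u + v) s = α)).image (fun s => s + (α - β)) := by
  have hshift : Finset.Ico (u + v) (u + v + v) = (Finset.range v).image (· + (u + v)) := by
    rw [Finset.range_eq_Ico, Finset.image_add_right_Ico, Nat.zero_add, Nat.add_comm v]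
  rw [h.filter_gapAt_eq_up hlt.ne', Finset.image_image, hshift, Finset.image_image]
  exact Finset.image_congr fun x hx => h.fract_mul_add_of_lt hlt (Finset.mem_range.1 hx)

end GapBasis

/-- The recurrences of the Euclidean algorithm on `(1, a)` for the remainders `θ` and the
denominators `q`, with the index shift of `directed_reduction`. The multipliers `k` are arbitrary
here; the Euclidean algorithm takes for them the partial quotients of `a`. -/
structure EuclideanRecurrence (a : ℝ) (θ : ℕ → ℝ) (q k : ℕ → ℕ) : Prop where
  θ_zero : θ 0 = 1
  θ_one : θ 1 = a
  q_zero : q 0 = 0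
  q_one : q 1 = 1
  θ_rec : ∀ i, θ (i + 2) = θ i - (k (i + 1) : ℝ) * θ (i + 1)
  q_rec : ∀ i, q (i + 2) = q i + k (i + 1) * q (i + 1)

namespace EuclideanRecurrence

variable {a : ℝ} {θ : ℕ → ℝ} {q k : ℕ → ℕ}

lemma det (h : EuclideanRecurrence a θ q k) (i : ℕ) :
    (q (i + 1) : ℝ) * θ i + q i * θ (i + 1) = 1 := by
  induction i with
  | zero => simp [h.q_zero, h.q_one, h.θ_zero]
  | succ i ih =>
    rw [h.q_rec, h.θ_rec]
    push_cast
    linear_combination ih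

lemma exists_mul_q_eq (h : EuclideanRecurrence a θ q k) (i : ℕ) :
    ∃ p : ℤ, a * q i = p - (-1) ^ i * θ i := by
  induction i using Nat.twoStepInduction with
  | zero => exact ⟨1, by simp [h.q_zero, h.θ_zero]⟩
  | one => exact ⟨0, by simp [h.q_one, h.θ_one]⟩
  | more i ih ih' =>
    obtain ⟨p, hp⟩ := ih
    obtain ⟨p', hp'⟩ := ih'
    refine ⟨p + k (i + 1) * p', ?_⟩
    rw [h.q_rec, h.θ_rec]
    push_cast
    linear_combination hp + k (i + 1) * hp'

lemma exists_mul_semi_q_eq (h : EuclideanRecurrence a θ q k) (i t : ℕ) :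
    ∃ p : ℤ, a * (q i + t * q (i + 1) : ℕ) = p - (-1) ^ i * (θ i - t * θ (i + 1)) := by
  obtain ⟨p, hp⟩ := h.exists_mul_q_eq i
  obtain ⟨p', hp'⟩ := h.exists_mul_q_eq (i + 1)
  refine ⟨p + t * p', ?_⟩
  push_cast
  linear_combination hp + t * hp'

lemma semi_det (h : EuclideanRecurrence a θ q k) (i t : ℕ) :
    q (i + 1) * (θ i - t * θ (i + 1)) + (q i + t * q (i + 1) : ℕ) * θ (i + 1) = 1 := by
  push_cast
  linear_combination h.det i

lemma gapBasis_of_even (h : EuclideanRecurrence a θ q k) {i t : ℕ} (hi : Even i)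
    (hpos : 0 < θ (i + 1)) (hpos' : 0 < θ i - t * θ (i + 1)) :
    GapBasis a (q (i + 1)) (q i + t * q (i + 1)) (θ (i + 1)) (θ i - t * θ (i + 1)) where
  up_pos := hpos
  down_pos := hpos'
  up := by simpa [pow_succ, hi.neg_one_pow] using h.exists_mul_q_eq (i + 1)
  down := by simpa only [hi.neg_one_pow, one_mul] using h.exists_mul_semi_q_eq i t
  det := h.semi_det i t

lemma gapBasis_of_odd (h : EuclideanRecurrence a θ q k) {i t : ℕ} (hi : Odd i)
    (hpos : 0 < θ (i + 1)) (hpos' : 0 < θ i - t * θ (i + 1)) :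
    GapBasis a (q i + t * q (i + 1)) (q (i + 1)) (θ i - t * θ (i + 1)) (θ (i + 1)) where
  up_pos := hpos'
  down_pos := hpos
  up := by
    simpa only [hi.neg_one_pow, neg_one_mul, sub_neg_eq_add] using h.exists_mul_semi_q_eq i t
  down := by simpa [pow_succ, hi.neg_one_pow] using h.exists_mul_q_eq (i + 1)
  det := by rw [add_comm, h.semi_det]

lemma θ_succ_pos (h : EuclideanRecurrence a θ q k) {i : ℕ}
    (hk : (k (i + 1) : ℤ) = ⌊θ i / θ (i + 1)⌋) (hk_pos : 0 < k (i + 1)) : 0 < θ (i + 1) := by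
  have hquot : 0 < θ i / θ (i + 1) := one_pos.trans_le (Int.floor_pos.1 (by omega))
  -- A positive quotient gives the two remainders the same sign, which is positive by `det`.
  rcases div_pos_iff.1 hquot with ⟨-, hpos⟩ | ⟨hneg, hneg'⟩
  · exact hpos
  · have h₁ := mul_nonpos_of_nonneg_of_nonpos (Nat.cast_nonneg (α := ℝ) (q (i + 1))) hneg.le
    have h₂ := mul_nonpos_of_nonneg_of_nonpos (Nat.cast_nonneg (α := ℝ) (q i)) hneg'.le
    linarith [h.det i]

lemma θ_ne_zero (h : EuclideanRecurrence a θ q k) (ha : Irrational a) (i : ℕ) :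
    θ (i + 1) ≠ 0 := by
  intro hθ
  obtain ⟨p, hp⟩ := h.exists_mul_q_eq (i + 1)
  have hdet := h.det i
  have hq : q (i + 1) ≠ 0 := by
    intro hq
    simp [hq, hθ] at hdet
  rw [hθ, mul_zero, sub_zero] at hp
  exact (ha.mul_natCast hq).ne_int p hp

lemma θ_succ_lt_semi_θ (h : EuclideanRecurrence a θ q k) (ha : Irrational a) {i t : ℕ}
    (hk : (k (i + 1) : ℤ) = ⌊θ i / θ (i + 1)⌋) (ht : t < k (i + 1)) :
    θ (i + 1) < θ i - t * θ (i + 1) := by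
  have hpos : 0 < θ (i + 1) := h.θ_succ_pos hk (Nat.zero_lt_of_lt ht)
  have hle : (k (i + 1) : ℝ) * θ (i + 1) ≤ θ i := by
    rw [← le_div_iff₀ hpos]
    exact_mod_cast Int.le_floor.1 hk.le
  have hnext : 0 < θ (i + 2) :=
    lt_of_le_of_ne (by rw [h.θ_rec]; exact sub_nonneg.2 hle) (h.θ_ne_zero ha (i + 1)).symm
  have htk : (t : ℝ) + 1 ≤ k (i + 1) := by exact_mod_cast ht
  have htk_mul : (t + 1) * θ (i + 1) ≤ k (i + 1) * θ (i + 1) :=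
    mul_le_mul_of_nonneg_right htk hpos.le
  rw [h.θ_rec] at hnext
  linarith

end EuclideanRecurrence

/-- Equality in `hlt` would mean that the `n` points are already the whole orbit of a rational
`a`. -/
theorem directed_reduction_general (a : ℝ) (θ : ℕ → ℝ) (q k : ℕ → ℕ)
    (hθ0 : θ 0 = 1) (hθ1 : θ 1 = a)
    (hq0 : q 0 = 0) (hq1 : q 1 = 1)
    (hk : ∀ i, (k (i + 1) : ℤ) = ⌊θ i / θ (i + 1)⌋)
    (hθrec : ∀ i, θ (i + 2) = θ i - (k (i + 1) : ℝ) * θ (i + 1))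
    (hqrec : ∀ i, q (i + 2) = q i + k (i + 1) * q (i + 1))
    (i t : ℕ) (ht : t < k (i + 1)) (hlt : θ (i + 1) < θ i - (t : ℝ) * θ (i + 1))
    (n : ℕ) (hn : n = q (i + 1) + (q i + t * q (i + 1))) :
    (Even i →
      (Finset.Ico n (n + q (i + 1))).image (fun x : ℕ => Int.fract (a * x)) =
        ((pts a n).filter (fun s => gapAt a n s = θ i - (t : ℝ) * θ (i + 1))).image
          (fun s => s + θ (i + 1))) ∧
    (Odd i →
      (Finset.Ico n (n + q (i + 1))).image (fun x : ℕ => Int.fract (a * x)) =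
        ((pts a n).filter (fun s => gapAt a n s = θ i - (t : ℝ) * θ (i + 1))).image
          (fun s => s + (θ i - (t : ℝ) * θ (i + 1) - θ (i + 1)))) ∧
    (∀ x : ℕ, n ≤ x → x < n + q (i + 1) → ∀ s ∈ pts a n, gapAt a n s = θ (i + 1) →
      ¬(s < Int.fract (a * x) ∧ Int.fract (a * x) < s + θ (i + 1))) := by
  have h : EuclideanRecurrence a θ q k := ⟨hθ0, hθ1, hq0, hq1, hθrec, hqrec⟩
  have hpos : 0 < θ (i + 1) := h.θ_succ_pos (hk i) (Nat.zero_lt_of_lt ht)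
  have hpos' : 0 < θ i - t * θ (i + 1) := hpos.trans hlt
  have heven (hi : Even i) := (h.gapBasis_of_even hi hpos hpos').image_Ico_of_up_lt_down hlt
  have hodd (hi : Odd i) := (h.gapBasis_of_odd hi hpos hpos').image_Ico_of_down_lt_up hlt
  rw [← hn] at heven
  rw [Nat.add_comm _ (q (i + 1)), ← hn] at hodd
  refine ⟨heven, hodd, fun x hnx hxn s hs hgap => ?_⟩
  have hx := Finset.mem_image_of_mem (fun x : ℕ => Int.fract (a * x)) (Finset.mem_Ico.2 ⟨hnx, hxn⟩)
  rcases Nat.even_or_odd i with hi | hi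
  · rw [heven hi] at hx
    exact notMem_gap_of_mem_image_add hpos hlt hlt.ne hx hs hgap
  · rw [hodd hi] at hx
    exact notMem_gap_of_mem_image_add (sub_pos.2 hlt) (sub_lt_self _ hpos) hlt.ne hx hs hgap

/-- **Directed reduction.**
Indexing is shifted by one: `θ (m+1)`, `q (m+1)` denote the mathematical `θ_m`, `q_m`
(so `θ 0 = θ₋₁ = 1`, `θ 1 = θ₀ = a`, `q 0 = q₋₁ = 0`, `q 1 = q₀ = 1`), and `k (i+1) = k_{i+1}`.
For `i ≥ 0`, `0 ≤ t < k_{i+1}` and `n = q_i + q_{i-1,t}`, the `q_i` new points `{a·x}`,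
`n ≤ x < n + q_i`, are exactly the points `s + θ_i` (for `i` even), resp.
`s + θ_{i-1,t} - θ_i` (for `i` odd), for `s` ranging over the left endpoints of the `q_i`
gaps of length `θ_{i-1,t}`; and no new point falls in any gap of length `θ_i`. -/
theorem directed_reduction (a : ℝ) (ha0 : 0 < a) (ha1 : a < 1) (hirr : Irrational a)
    (θ : ℕ → ℝ) (q k : ℕ → ℕ)
    (hθ0 : θ 0 = 1) (hθ1 : θ 1 = a)
    (hq0 : q 0 = 0) (hq1 : q 1 = 1)
    (hk : ∀ i, (k (i + 1) : ℤ) = ⌊θ i / θ (i + 1)⌋)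
    (hθrec : ∀ i, θ (i + 2) = θ i - (k (i + 1) : ℝ) * θ (i + 1))
    (hqrec : ∀ i, q (i + 2) = q i + k (i + 1) * q (i + 1))
    (i t : ℕ) (ht : t < k (i + 1))
    (n : ℕ) (hn : n = q (i + 1) + (q i + t * q (i + 1))) :
    (Even i →
      (Finset.Ico n (n + q (i + 1))).image (fun x : ℕ => Int.fract (a * x)) =
        ((pts a n).filter (fun s => gapAt a n s = θ i - (t : ℝ) * θ (i + 1))).image
          (fun s => s + θ (i + 1))) ∧
    (Odd i →
      (Finset.Ico n (n + q (i + 1))).image (fun x : ℕ => Int.fract (a * x)) =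
        ((pts a n).filter (fun s => gapAt a n s = θ i - (t : ℝ) * θ (i + 1))).image
          (fun s => s + (θ i - (t : ℝ) * θ (i + 1) - θ (i + 1)))) ∧
    (∀ x : ℕ, n ≤ x → x < n + q (i + 1) → ∀ s ∈ pts a n, gapAt a n s = θ (i + 1) →
      ¬(s < Int.fract (a * x) ∧ Int.fract (a * x) < s + θ (i + 1))) := by
  have h : EuclideanRecurrence a θ q k := ⟨hθ0, hθ1, hq0, hq1, hθrec, hqrec⟩
  exact directed_reduction_general a θ q k hθ0 hθ1 hq0 hq1 hk hθrec hqrec i t ht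
    (h.θ_succ_lt_semi_θ hirr (hk i) ht) n hn
end

section
/- Distance update for the division-based step (regular algorithm), even case: let b ∈ [0,1) and let i ≥ 0 be even. Then d_{q_{i+1}+q_i}(b) = d_{q_i+q_{i−1}}(b) mod θ_i, i.e. the new distance is the remainder of the old distance upon division by θ_i (the unique representative in [0, θ_i)). -/
/-- `dLeft a b n = min { {b - a·x} : 0 ≤ x < n }`, the distance from `b` to the nearest point
of the configuration `{a·x mod 1 : 0 ≤ x < n}` lying to its left (cyclically). -/
noncomputable def dLeft (a b : ℝ) (n : ℕ) : ℝ :=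
  sInf {y : ℝ | ∃ x : ℕ, x < n ∧ y = Int.fract (b - a * x)}

/-!
For even `i` the number `a` lies between the consecutive convergents `p_i / q_i` (below) and
`p_{i-1} / q_{i-1}` (above), which have determinant one. For two such fractions
`p₁ / q₁ ≤ a ≤ p₀ / q₀` put `t₁ = q₁ a - p₁` and `t₀ = p₀ - q₀ a`. In the configuration of the
`q₀ + q₁` points `a x mod 1`, the gap to the right of `a x` is `t₁` if `x < q₀` (the next point
comes from `x + q₁`) and `t₀` if `q₀ ≤ x` (the next point comes from `x - q₀`). Hence `x` gives the
left neighbour of `b` exactly when `{b - a x}` is smaller than the gap to the right of `a x`.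

Passing from `q₀` to `q₀ + k q₁` with `k = ⌊t₀ / t₁⌋` cuts every gap `t₀` into `k` gaps `t₁` and a
remainder `t₀ - k t₁`. If `x` gives the old left neighbour and `d` is the old distance, then
`x + ⌊d / t₁⌋ q₁` passes the criterion in the new configuration.
-/

theorem fract_eq_fract_sub {R : Type*} [Ring R] [LinearOrder R] [IsStrictOrderedRing R]
    [FloorRing R] {u v δ : R} (z : ℤ) (h : v = u - δ + z) (hδ0 : 0 ≤ δ) (hδ : δ ≤ Int.fract u) :
    Int.fract v = Int.fract u - δ := by
  refine Int.fract_eq_iff.2 ⟨sub_nonneg.2 hδ, ?_, ⌊u⌋ + z, ?_⟩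
  · exact (sub_le_self _ hδ0).trans_lt (Int.fract_lt_one u)
  · rw [h, Int.fract]
    push_cast
    abel

theorem pos_or_neg_of_mul_sub_mul_pos {R : Type*} [Ring R] [LinearOrder R] [IsStrictOrderedRing R]
    {u v s t : R} (hs : 0 ≤ s) (ht : 0 ≤ t) (h : 0 < u * s - v * t) : 0 < u ∨ v < 0 := by
  by_contra! hneg
  exact (sub_pos.1 h).not_ge
    ((mul_nonpos_of_nonpos_of_nonneg hneg.1 hs).trans (mul_nonneg hneg.2 ht))

section LeftDistance

variable (a b : ℝ) {n : ℕ}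

theorem exists_dLeft_eq (hn : 0 < n) : ∃ x < n, dLeft a b n = Int.fract (b - a * x) := by
  have hfin : {y : ℝ | ∃ x : ℕ, x < n ∧ y = Int.fract (b - a * x)}.Finite := by
    refine ((Set.finite_lt_nat n).image fun x : ℕ => Int.fract (b - a * x)).subset ?_
    rintro _ ⟨x, hx, rfl⟩
    exact ⟨x, hx, rfl⟩
  have hne : {y : ℝ | ∃ x : ℕ, x < n ∧ y = Int.fract (b - a * x)}.Nonempty := ⟨_, 0, hn, rfl⟩
  exact hne.csInf_mem hfin

theorem dLeft_le_fract {x : ℕ} (hx : x < n) : dLeft a b n ≤ Int.fract (b - a * x) := by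
  refine csInf_le ⟨0, ?_⟩ ⟨x, hx, rfl⟩
  rintro _ ⟨y, -, rfl⟩
  exact Int.fract_nonneg _

end LeftDistance

/-- Two adjacent fractions `p₁ / q₁ ≤ a ≤ p₀ / q₀` (of determinant one) around `a`. The
inequalities are cleared of denominators, so that `1 / 0` is allowed as an upper fraction. -/
structure FareyBracket (a : ℝ) where
  (p₀ p₁ : ℤ)
  (q₀ q₁ : ℕ)
  lower_le : p₁ ≤ q₁ * a
  le_upper : q₀ * a ≤ p₀
  det_eq_one : q₁ * p₀ - q₀ * p₁ = 1

namespace FareyBracket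

variable {a : ℝ} (B : FareyBracket a)

/-- The scaled distance `t₀ = p₀ - q₀ a` of `a` to the upper fraction. -/
def upperGap : ℝ := B.p₀ - B.q₀ * a

/-- The scaled distance `t₁ = q₁ a - p₁` of `a` to the lower fraction. -/
def lowerGap : ℝ := B.q₁ * a - B.p₁

/-- The distance from `a x` to its right neighbour among the points `a y mod 1`, `y < q₀ + q₁`;
only meaningful for `x < q₀ + q₁`. -/
noncomputable def rightGap (x : ℕ) : ℝ := if x < B.q₀ then B.lowerGap else B.upperGap

theorem upperGap_nonneg : 0 ≤ B.upperGap := sub_nonneg.2 B.le_upper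

theorem lowerGap_nonneg : 0 ≤ B.lowerGap := sub_nonneg.2 B.lower_le

theorem denom_add_denom_pos : 0 < B.q₀ + B.q₁ := by
  by_contra! h
  obtain ⟨h₀, h₁⟩ : B.q₀ = 0 ∧ B.q₁ = 0 := by omega
  simpa [h₀, h₁] using B.det_eq_one

theorem exists_coordinates (m p : ℤ) :
    ∃ u v : ℤ, m = u * B.q₁ + v * B.q₀ ∧ m * a - p = u * B.lowerGap - v * B.upperGap := by
  have hm : m = (m * B.p₀ - p * B.q₀) * B.q₁ + (B.q₁ * p - B.p₁ * m) * B.q₀ := by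
    linear_combination (-m) * B.det_eq_one
  have hp : p = (m * B.p₀ - p * B.q₀) * B.p₁ + (B.q₁ * p - B.p₁ * m) * B.p₀ := by
    linear_combination (-p) * B.det_eq_one
  refine ⟨m * B.p₀ - p * B.q₀, B.q₁ * p - B.p₁ * m, hm, ?_⟩
  have hmR := congrArg (Int.cast : ℤ → ℝ) hm
  have hpR := congrArg (Int.cast : ℤ → ℝ) hp
  push_cast at hmR hpR ⊢
  rw [lowerGap, upperGap]
  linear_combination a * hmR - hpR

theorem rightGap_le {x y : ℕ} (hx : x < B.q₀ + B.q₁) (hy : y < B.q₀ + B.q₁) {p : ℤ}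
    (hpos : 0 < (y - x) * a - p) : B.rightGap x ≤ (y - x) * a - p := by
  obtain ⟨u, v, hm, hδ⟩ := B.exists_coordinates (y - x) p
  push_cast at hδ
  have ht₀ := B.upperGap_nonneg
  have ht₁ := B.lowerGap_nonneg
  rw [hδ] at hpos ⊢
  have hsign : 0 < u ∨ v < 0 := by
    exact_mod_cast pos_or_neg_of_mul_sub_mul_pos ht₁ ht₀ hpos
  rw [rightGap]
  split_ifs with hxq
  · have hu : 1 ≤ u := by
      by_contra! hu
      have hv : v < 0 := hsign.resolve_left (by omega)
      -- `u ≤ 0` and `v ≤ -1` would give `y - x ≤ -q₀ < -x`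
      nlinarith
    have hv : v ≤ 0 := by
      by_contra! hv
      nlinarith
    have huR : (1 : ℝ) ≤ u := by exact_mod_cast hu
    have hvR : (v : ℝ) ≤ 0 := by exact_mod_cast hv
    nlinarith
  · have hv : v ≤ -1 := by
      by_contra! hv
      have hu : 0 < u := hsign.resolve_right (by omega)
      -- `1 ≤ u` and `0 ≤ v` would give `y ≥ x + q₁ ≥ q₀ + q₁`
      nlinarith
    have hu : 0 ≤ u := by
      by_contra! hu
      nlinarith
    have huR : (0 : ℝ) ≤ u := by exact_mod_cast hu
    have hvR : (v : ℝ) ≤ -1 := by exact_mod_cast hv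
    nlinarith

theorem dLeft_eq_fract_of_lt_rightGap {b : ℝ} {x : ℕ} (hx : x < B.q₀ + B.q₁)
    (h : Int.fract (b - a * x) < B.rightGap x) :
    dLeft a b (B.q₀ + B.q₁) = Int.fract (b - a * x) := by
  obtain ⟨y, hy, hd⟩ := exists_dLeft_eq a b B.denom_add_denom_pos
  refine (dLeft_le_fract a b hx).antisymm ?_
  by_contra! hlt
  have hdiff : Int.fract (b - a * x) - Int.fract (b - a * y) =
      (y - x) * a - (⌊b - a * x⌋ - ⌊b - a * y⌋ : ℤ) := by
    simp only [Int.fract]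
    push_cast
    ring
  have hgap := B.rightGap_le hx hy (hdiff ▸ sub_pos.2 (hd ▸ hlt))
  linarith [Int.fract_nonneg (b - a * y)]

theorem fract_lt_rightGap_of_dLeft_eq (ht₀ : 0 < B.upperGap) (ht₁ : 0 < B.lowerGap) {b : ℝ}
    {x : ℕ} (hx : x < B.q₀ + B.q₁) (h : dLeft a b (B.q₀ + B.q₁) = Int.fract (b - a * x)) :
    Int.fract (b - a * x) < B.rightGap x := by
  by_contra! hge
  rw [rightGap] at hge
  split_ifs at hge with hxq
  · have hnext : Int.fract (b - a * (x + B.q₁ : ℕ)) = Int.fract (b - a * x) - B.lowerGap :=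
      fract_eq_fract_sub (-B.p₁) (by rw [lowerGap]; push_cast; ring) ht₁.le hge
    linarith [dLeft_le_fract a b (show x + B.q₁ < B.q₀ + B.q₁ by omega)]
  · have hnext : Int.fract (b - a * (x - B.q₀ : ℕ)) = Int.fract (b - a * x) - B.upperGap :=
      fract_eq_fract_sub B.p₀
        (by rw [upperGap, Nat.cast_sub (not_lt.1 hxq)]; ring) ht₀.le hge
    linarith [dLeft_le_fract a b (show x - B.q₀ < B.q₀ + B.q₁ by omega)]

/-- The division step of the regular algorithm: the upper fraction is replaced by
`(p₀ + k p₁) / (q₀ + k q₁)`, where `k = ⌊t₀ / t₁⌋`. -/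
noncomputable def divStep : FareyBracket a where
  p₀ := B.p₀ + ⌊B.upperGap / B.lowerGap⌋₊ * B.p₁
  p₁ := B.p₁
  q₀ := B.q₀ + ⌊B.upperGap / B.lowerGap⌋₊ * B.q₁
  q₁ := B.q₁
  lower_le := B.lower_le
  le_upper := by
    have hk : ⌊B.upperGap / B.lowerGap⌋₊ * B.lowerGap ≤ B.upperGap :=
      mul_le_of_le_div₀ B.upperGap_nonneg B.lowerGap_nonneg
        (Nat.floor_le (div_nonneg B.upperGap_nonneg B.lowerGap_nonneg))
    simp only [lowerGap, upperGap] at hk ⊢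
    push_cast
    linarith
  det_eq_one := by
    push_cast
    linear_combination B.det_eq_one

theorem divStep_q₀ : B.divStep.q₀ = B.q₀ + ⌊B.upperGap / B.lowerGap⌋₊ * B.q₁ := rfl

theorem divStep_q₁ : B.divStep.q₁ = B.q₁ := rfl

theorem lowerGap_divStep : B.divStep.lowerGap = B.lowerGap := rfl

theorem upperGap_divStep : B.divStep.upperGap =
    B.upperGap - ⌊B.upperGap / B.lowerGap⌋₊ * B.lowerGap := by
  simp only [divStep, upperGap, lowerGap]
  push_cast
  ring

theorem fract_sub_mul_add (b : ℝ) (x j : ℕ)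
    (hj : j * B.lowerGap ≤ Int.fract (b - a * x)) :
    Int.fract (b - a * (x + j * B.q₁ : ℕ)) = Int.fract (b - a * x) - j * B.lowerGap :=
  fract_eq_fract_sub (-(j * B.p₁)) (by rw [lowerGap]; push_cast; ring)
    (mul_nonneg j.cast_nonneg B.lowerGap_nonneg) hj

theorem add_floor_mul_lt_and_sub_lt_rightGap_divStep (ht₁ : 0 < B.lowerGap) {r : ℝ} {x : ℕ}
    (hx : x < B.q₀ + B.q₁) (hr : r < B.rightGap x) :
    x + ⌊r / B.lowerGap⌋₊ * B.q₁ < B.divStep.q₀ + B.divStep.q₁ ∧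
      r - ⌊r / B.lowerGap⌋₊ * B.lowerGap <
        B.divStep.rightGap (x + ⌊r / B.lowerGap⌋₊ * B.q₁) := by
  have hrem : r - ⌊r / B.lowerGap⌋₊ * B.lowerGap < B.lowerGap := by
    linarith [(div_lt_iff₀ ht₁).1 (Nat.lt_floor_add_one (r / B.lowerGap))]
  rw [rightGap] at hr
  rw [rightGap, upperGap_divStep, lowerGap_divStep, divStep_q₀, divStep_q₁]
  split_ifs at hr with hxq
  · have hj : ⌊r / B.lowerGap⌋₊ = 0 := Nat.floor_eq_zero.2 ((div_lt_one ht₁).2 hr)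
    have hx' : x + ⌊r / B.lowerGap⌋₊ * B.q₁ < B.q₀ + ⌊B.upperGap / B.lowerGap⌋₊ * B.q₁ := by
      rw [hj, zero_mul, add_zero]
      exact Nat.lt_add_right _ hxq
    exact ⟨Nat.lt_add_right _ hx', by rwa [if_pos hx']⟩
  · have hjk : ⌊r / B.lowerGap⌋₊ ≤ ⌊B.upperGap / B.lowerGap⌋₊ := by gcongr
    refine ⟨by linarith [Nat.mul_le_mul_right B.q₁ hjk], ?_⟩
    split_ifs with hx'
    · exact hrem
    · have hj : ⌊r / B.lowerGap⌋₊ = ⌊B.upperGap / B.lowerGap⌋₊ := by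
        refine hjk.antisymm (not_lt.1 fun hlt => ?_)
        have := Nat.mul_le_mul_right B.q₁ (Nat.succ_le_of_lt hlt)
        rw [Nat.succ_mul] at this
        omega
      rw [hj]
      exact sub_lt_sub_right hr _

theorem dLeft_divStep (ht₀ : 0 < B.upperGap) (ht₁ : 0 < B.lowerGap) (b : ℝ) :
    dLeft a b (B.divStep.q₀ + B.divStep.q₁) = dLeft a b (B.q₀ + B.q₁) -
      B.lowerGap * ⌊dLeft a b (B.q₀ + B.q₁) / B.lowerGap⌋ := by
  obtain ⟨x, hx, hd⟩ := exists_dLeft_eq a b B.denom_add_denom_pos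
  rw [hd]
  set r := Int.fract (b - a * x)
  have hr : r < B.rightGap x := B.fract_lt_rightGap_of_dLeft_eq ht₀ ht₁ hx hd
  have hquot : 0 ≤ r / B.lowerGap := div_nonneg (Int.fract_nonneg _) ht₁.le
  have hshift : Int.fract (b - a * (x + ⌊r / B.lowerGap⌋₊ * B.q₁ : ℕ)) =
      r - ⌊r / B.lowerGap⌋₊ * B.lowerGap :=
    B.fract_sub_mul_add b x _ ((le_div_iff₀ ht₁).1 (Nat.floor_le hquot))
  obtain ⟨hlt, hgap⟩ := B.add_floor_mul_lt_and_sub_lt_rightGap_divStep ht₁ hx hr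
  rw [B.divStep.dLeft_eq_fract_of_lt_rightGap hlt (hshift ▸ hgap), hshift,
    ← natCast_floor_eq_intCast_floor hquot, mul_comm]

end FareyBracket

/-- The numerators `p_i` of the convergents with partial quotients `k 1, k 2, …`, with the index
shifted by one: `convergentNum k i` is `p_{i-1}`, so the sequence starts with `p_{-1} = 1`. -/
def convergentNum (k : ℕ → ℕ) : ℕ → ℕ
  | 0 => 1
  | 1 => 0
  | i + 2 => convergentNum k i + k (i + 1) * convergentNum k (i + 1)

theorem convergent_det {q k : ℕ → ℕ} (hq0 : q 0 = 0) (hq1 : q 1 = 1)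
    (hqrec : ∀ i, q (i + 2) = q i + k (i + 1) * q (i + 1)) (i : ℕ) :
    (q (i + 1) * convergentNum k i - q i * convergentNum k (i + 1) : ℤ) = (-1) ^ i := by
  induction i with
  | zero => simp [hq0, hq1, convergentNum]
  | succ i ih =>
    rw [hqrec, convergentNum, pow_succ, ← ih]
    push_cast
    ring

theorem remainder_eq_convergent_error {q k : ℕ → ℕ} (hq0 : q 0 = 0) (hq1 : q 1 = 1)
    (hqrec : ∀ i, q (i + 2) = q i + k (i + 1) * q (i + 1))
    {a : ℝ} {θ : ℕ → ℝ} (hθ0 : θ 0 = 1) (hθ1 : θ 1 = a)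
    (hθrec : ∀ i, θ (i + 2) = θ i - k (i + 1) * θ (i + 1)) (i : ℕ) :
    θ i = (-1) ^ i * (convergentNum k i - q i * a) := by
  induction i using Nat.twoStepInduction with
  | zero => simp [hθ0, hq0, convergentNum]
  | one => simp [hθ1, hq1, convergentNum]
  | more i ih₀ ih₁ =>
    rw [hθrec, hqrec, convergentNum, ih₀, ih₁]
    push_cast
    ring

theorem remainder_pos_of_irrational {θ : ℕ → ℝ} (h0 : 0 < θ 0) (h1 : 0 < θ 1)
    (hirr : Irrational (θ 0 / θ 1))
    (hθrec : ∀ i, θ (i + 2) = θ i - ⌊θ i / θ (i + 1)⌋ * θ (i + 1)) (i : ℕ) : 0 < θ i := by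
  suffices h : ∀ i, 0 < θ i ∧ 0 < θ (i + 1) ∧ Irrational (θ i / θ (i + 1)) from (h i).1
  intro i
  induction i with
  | zero => exact ⟨h0, h1, hirr⟩
  | succ i ih =>
    obtain ⟨-, hpos, hirr⟩ := ih
    have hfract : θ (i + 2) = θ (i + 1) * Int.fract (θ i / θ (i + 1)) := by
      rw [hθrec, Int.fract, mul_sub, mul_div_cancel₀ _ hpos.ne', mul_comm (θ (i + 1))]
    have hfract_irr : Irrational (Int.fract (θ i / θ (i + 1))) := hirr.sub_intCast _
    refine ⟨hpos, ?_, ?_⟩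
    · exact hfract ▸ mul_pos hpos ((Int.fract_nonneg _).lt_of_ne' hfract_irr.ne_zero)
    · rw [hfract, div_mul_cancel_left₀ hpos.ne']
      exact hfract_irr.inv

theorem distance_update_division_even_general (a : ℝ) (θ : ℕ → ℝ) (q k : ℕ → ℕ)
    (hθ0 : θ 0 = 1) (hθ1 : θ 1 = a) (hq0 : q 0 = 0) (hq1 : q 1 = 1)
    (hk : ∀ i, (k (i + 1) : ℤ) = ⌊θ i / θ (i + 1)⌋)
    (hθrec : ∀ i, θ (i + 2) = θ i - (k (i + 1) : ℝ) * θ (i + 1))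
    (hqrec : ∀ i, q (i + 2) = q i + k (i + 1) * q (i + 1))
    (b : ℝ) (i : ℕ) (hi : Even i) (hpos : 0 < θ i) (hpos' : 0 < θ (i + 1)) :
    dLeft a b (q (i + 2) + q (i + 1)) =
      dLeft a b (q (i + 1) + q i) -
        θ (i + 1) * (⌊dLeft a b (q (i + 1) + q i) / θ (i + 1)⌋ : ℝ) := by
  have hθ := remainder_eq_convergent_error hq0 hq1 hqrec hθ0 hθ1 hθrec
  have hupper : θ i = convergentNum k i - q i * a := by rw [hθ, hi.neg_one_pow, one_mul]
  have hlower : θ (i + 1) = q (i + 1) * a - convergentNum k (i + 1) := by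
    rw [hθ, hi.add_one.neg_one_pow]
    ring
  let B : FareyBracket a :=
    { p₀ := convergentNum k i
      p₁ := convergentNum k (i + 1)
      q₀ := q i
      q₁ := q (i + 1)
      lower_le := by rw [Int.cast_natCast]; linarith
      le_upper := by rw [Int.cast_natCast]; linarith
      det_eq_one := by rw [convergent_det hq0 hq1 hqrec, hi.neg_one_pow] }
  have hB₀ : B.upperGap = θ i := hupper.symm
  have hB₁ : B.lowerGap = θ (i + 1) := hlower.symm
  have hstep : B.divStep.q₀ = q (i + 2) := by
    rw [hqrec, B.divStep_q₀, hB₀, hB₁, ← Int.floor_toNat, ← hk, Int.toNat_natCast]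
  have hupdate := B.dLeft_divStep (hB₀ ▸ hpos) (hB₁ ▸ hpos') b
  rwa [hstep, B.divStep_q₁, hB₁, add_comm B.q₀] at hupdate

/-- **Distance update for the division-based step (regular algorithm), even case.**
Indexing is shifted by one: `θ (m+1)`, `q (m+1)` denote the mathematical `θ_m`, `q_m`
(so `θ 0 = θ₋₁ = 1`, `θ 1 = θ₀ = a`, `q 0 = q₋₁ = 0`, `q 1 = q₀ = 1`), and `k (i+1) = k_{i+1}`.
For `b ∈ [0,1)` and `i` even:
`d_{q_{i+1}+q_i}(b) = d_{q_i+q_{i-1}}(b) mod θ_i`, the remainder being the unique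
representative in `[0, θ_i)`, i.e. `d_old - θ_i·⌊d_old / θ_i⌋`. -/
theorem distance_update_division_even (a : ℝ) (ha0 : 0 < a) (ha1 : a < 1)
    (hirr : Irrational a)
    (θ : ℕ → ℝ) (q k : ℕ → ℕ)
    (hθ0 : θ 0 = 1) (hθ1 : θ 1 = a)
    (hq0 : q 0 = 0) (hq1 : q 1 = 1)
    (hk : ∀ i, (k (i + 1) : ℤ) = ⌊θ i / θ (i + 1)⌋)
    (hθrec : ∀ i, θ (i + 2) = θ i - (k (i + 1) : ℝ) * θ (i + 1))
    (hqrec : ∀ i, q (i + 2) = q i + k (i + 1) * q (i + 1))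
    (b : ℝ) (hb0 : 0 ≤ b) (hb1 : b < 1)
    (i : ℕ) (hi : Even i) :
    dLeft a b (q (i + 2) + q (i + 1)) =
      dLeft a b (q (i + 1) + q i) -
        θ (i + 1) * (⌊dLeft a b (q (i + 1) + q i) / θ (i + 1)⌋ : ℝ) := by
  have hθ : ∀ j, 0 < θ j := remainder_pos_of_irrational (by simp [hθ0]) (by rwa [hθ1])
    (by rw [hθ0, hθ1, one_div]; exact hirr.inv) fun j => by rw [hθrec, ← hk, Int.cast_natCast]
  exact distance_update_division_even_general a θ q k hθ0 hθ1 hq0 hq1 hk hθrec hqrec b i hi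
    (hθ i) (hθ (i + 1))
end
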